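/- arXiv:1907.07447 — 2 statements merged into one kernel-verified Lean document; each statement's English description precedes it below -/
import Mathlib

section
/- For the Hermite-type weight W(x) = e^{−x²} L(x)L(x)*, the squared norms ℋ(n) of the monic MVOPs are diagonal matrices for every n ≥ 0, and the recurrence coefficients C(n) = ℋ(n)ℋ(n−1)⁻¹ are diagonal for every n ≥ 1. -/
open MeasureTheory Matrix Finset
open scoped ComplexOrder

/-- The physicists' Hermite polynomials, as functions on `ℝ`:
`H_0 = 1`, `H_1(x) = 2x`, `H_{m+1}(x) = 2x H_m(x) − 2m H_{m−1}(x)`. -/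
noncomputable def hermiteF : ℕ → ℝ → ℝ
  | 0, _ => 1
  | 1, x => 2 * x
  | (m + 2), x => 2 * x * hermiteF (m + 1) x - 2 * (m + 1) * hermiteF m x

/-- Entrywise integral of a matrix-valued function on `ℝ`. -/
noncomputable def matInt (N : ℕ) (F : ℝ → Matrix (Fin N) (Fin N) ℂ) :
    Matrix (Fin N) (Fin N) ℂ :=
  Matrix.of fun i j => ∫ y : ℝ, F y i j

/-- Entrywise derivative of a matrix-valued function on `ℝ`. -/
noncomputable def matDeriv (N : ℕ) (F : ℝ → Matrix (Fin N) (Fin N) ℂ) (x : ℝ) :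
    Matrix (Fin N) (Fin N) ℂ :=
  Matrix.of fun i j => deriv (fun y => F y i j) x

/-- `F` is a matrix polynomial of degree `n` with leading coefficient the identity. -/
def IsMonicMatPoly (N n : ℕ) (F : ℝ → Matrix (Fin N) (Fin N) ℂ) : Prop :=
  ∃ c : ℕ → Matrix (Fin N) (Fin N) ℂ, c n = 1 ∧
    ∀ x : ℝ, F x = ∑ k ∈ Finset.range (n + 1), ((x : ℂ) ^ k) • c k

/-- The matrix-valued inner product `⟨H, G⟩ = ∫ H(y) W(y) G(y)* dy`. -/
noncomputable def matIP (N : ℕ) (W H G : ℝ → Matrix (Fin N) (Fin N) ℂ) :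
    Matrix (Fin N) (Fin N) ℂ :=
  matInt N fun y => H y * W y * (G y)ᴴ

/-- The lower triangular matrix `L(x)` with entries
`L(x)_{jk} = (H_{j−k}(x)/(j−k)!)·(α_j/α_k)` for `j ≥ k` (here `0`-based indices). -/
noncomputable def Lmat (N : ℕ) (α : Fin N → ℝ) (x : ℝ) : Matrix (Fin N) (Fin N) ℂ :=
  Matrix.of fun j k =>
    if (k : ℕ) ≤ (j : ℕ) then
      ((hermiteF ((j : ℕ) - (k : ℕ)) x / Nat.factorial ((j : ℕ) - (k : ℕ)) *
          (α j / α k) : ℝ) : ℂ)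
    else 0

/-- The Hermite-type matrix weight `W(x) = e^{−x²} L(x)L(x)*`. -/
noncomputable def hermW (N : ℕ) (α : Fin N → ℝ) (x : ℝ) : Matrix (Fin N) (Fin N) ℂ :=
  Real.exp (-x ^ 2) • (Lmat N α x * (Lmat N α x)ᴴ)

/-- The nilpotent shift matrix `A` with `A_{j,j−1} = 2α_j/α_{j−1}` (1-based), i.e.
(0-based) `A j k = 2 α_j / α_k` when `j = k + 1`. -/
noncomputable def Amat (N : ℕ) (α : Fin N → ℝ) : Matrix (Fin N) (Fin N) ℂ :=
  Matrix.of fun j k => if (j : ℕ) = (k : ℕ) + 1 then ((2 * α j / α k : ℝ) : ℂ) else 0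

/-- The diagonal matrix `J = diag(1, 2, …, N)`. -/
def Jmat (N : ℕ) : Matrix (Fin N) (Fin N) ℂ :=
  Matrix.diagonal fun j => ((j : ℕ) + 1 : ℂ)

/-!
For constant matrices `A`, `J` with `L' = A L` and `L'' - 2x L' = 2 (L J - J L)`, the operator
`D U = U'' - 2x U' + 2 (U' A - U J)` satisfies `(D U) L = (U L)'' - 2x (U L)' - 2 (U L) J`. Hence
`D` is symmetric for the weight `e^{-x²} L L*` as soon as `J` is self-adjoint. It maps `P n` to
`Γ (P n)` plus terms of lower degree, where `Γ = -2 (n + J)`, so that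
`⟨D (P n), P n⟩ = Γ ⟨P n, P n⟩` is self-adjoint; that is, `⟨P n, P n⟩` commutes with `Γ`, hence
with `J`. For the Hermite-type weight `J = diag(1, …, N)` has distinct diagonal entries, so its
commutant consists of diagonal matrices.
-/

open Polynomial

section MomentPairing

variable {R M : Type*} [CommRing R] [Ring M] [StarRing M] [Algebra R M] (m : ℕ → R)

/-- The sesquilinear form `⟨U, V⟩ = ∑ m(k+l) Uₖ Vₗ*` on `M[X]` given by a scalar moment sequence
`m`; it stands for `∫ U V* dμ`. The argument in which it is `M`-linear comes last. -/
noncomputable def momentPairing (V : M[X]) : M[X] →ₗ[M] M :=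
  lsum fun k => LinearMap.toSpanSingleton M M (V.sum fun l b => m (k + l) • star b)

local notation "⟪" U "," V "⟫[" m "]" => momentPairing m V U

lemma momentPairing_eq_sum (U V : M[X]) :
    ⟪U, V⟫[m] = U.sum fun k a => V.sum fun l b => m (k + l) • (a * star b) := by
  simp [momentPairing, Polynomial.sum_def, Finset.mul_sum]

lemma momentPairing_monomial (k l : ℕ) (a b : M) :
    ⟪monomial k a, monomial l b⟫[m] = m (k + l) • (a * star b) := by
  simp [momentPairing_eq_sum, sum_monomial_index]

lemma momentPairing_mul_eq_zero_of_degree_lt {P : ℕ → M[X]} (hdeg : ∀ k, (P k).natDegree ≤ k)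
    (hlead : ∀ k, (P k).coeff k = 1) {L Y : M[X]} {n : ℕ}
    (horth : ∀ k < n, ⟪P k * L, Y⟫[m] = 0) {V : M[X]} (hV : V.degree < n) :
    ⟪V * L, Y⟫[m] = 0 := by
  nontriviality M
  let S : Polynomial.Sequence M := ⟨P, fun k =>
    (degree_le_of_natDegree_le (hdeg k)).antisymm (le_degree_of_ne_zero (by simp [hlead]))⟩
  have hmonic (k : ℕ) : IsUnit (S k).leadingCoeff := by
    rw [leadingCoeff, S.natDegree_eq]
    exact (hlead k).symm ▸ isUnit_one
  have hspan : V ∈ Submodule.span M (S '' Set.Iio n) := by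
    rwa [S.span_degreeLT fun k _ => hmonic k, mem_degreeLT]
  clear hV
  induction hspan using Submodule.span_induction with
  | mem _ h => obtain ⟨k, hk, rfl⟩ := h; exact horth k hk
  | zero => simp
  | add V V' _ _ hV hV' => rw [add_mul, map_add, hV, hV', add_zero]
  | smul c V _ hV => rw [smul_mul_assoc, map_smul, hV, smul_zero]

variable [StarRing R] [TrivialStar R] [StarModule R M]

lemma star_momentPairing (U V : M[X]) : star ⟪U, V⟫[m] = ⟪V, U⟫[m] := by
  simp only [momentPairing_eq_sum, Polynomial.sum_def, star_sum, star_smul, star_mul, star_star,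
    star_trivial]
  rw [Finset.sum_comm]
  simp only [add_comm]

lemma momentPairing_add_right (U V V' : M[X]) :
    ⟪U, V + V'⟫[m] = ⟪U, V⟫[m] + ⟪U, V'⟫[m] := by
  simp only [← star_momentPairing m _ U, map_add, star_add]

lemma momentPairing_mul_C_left (U V : M[X]) (c : M) :
    ⟪U * C c, V⟫[m] = ⟪U, V * C (star c)⟫[m] := by
  induction U using Polynomial.induction_on' with
  | add U U' hU hU' => simp only [add_mul, map_add, hU, hU']
  | monomial k a =>
    induction V using Polynomial.induction_on' with
    | add V V' hV hV' => simp only [add_mul, momentPairing_add_right, hV, hV']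
    | monomial l b => simp [monomial_mul_C, momentPairing_monomial, mul_assoc]

end MomentPairing

section GaussianMoment

lemma integrable_pow_mul_exp_neg_sq (k : ℕ) :
    Integrable fun x : ℝ => x ^ k * Real.exp (-x ^ 2) := by
  simpa using integrable_rpow_mul_exp_neg_mul_sq (b := 1) one_pos (s := k)
    (neg_one_lt_zero.trans_le k.cast_nonneg)

/-- The moments of the weight `e^{-x²}` on `ℝ`. -/
noncomputable def gaussianMoment (k : ℕ) : ℝ :=
  ∫ x : ℝ, x ^ k * Real.exp (-x ^ 2)

lemma two_mul_gaussianMoment_succ (k : ℕ) :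
    2 * gaussianMoment (k + 1) = k * gaussianMoment (k - 1) := by
  have hderiv (x : ℝ) : HasDerivAt (fun x => x ^ k * Real.exp (-x ^ 2))
      (k * (x ^ (k - 1) * Real.exp (-x ^ 2)) - 2 * (x ^ (k + 1) * Real.exp (-x ^ 2))) x := by
    refine ((hasDerivAt_pow k x).mul (hasDerivAt_pow 2 x).neg.exp).congr_deriv ?_
    simp only [Pi.neg_apply]
    push_cast
    ring
  have hlow := (integrable_pow_mul_exp_neg_sq (k - 1)).const_mul (k : ℝ)
  have hhigh := (integrable_pow_mul_exp_neg_sq (k + 1)).const_mul 2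
  have h := integral_eq_zero_of_hasDerivAt_of_integrable hderiv (hlow.sub hhigh)
    (integrable_pow_mul_exp_neg_sq k)
  rw [integral_sub hlow hhigh, integral_const_mul, integral_const_mul] at h
  exact (sub_eq_zero.mp h).symm

end GaussianMoment

section HermiteOperator

/-- The Hermite differential operator `U'' - 2XU'`. -/
noncomputable def hermiteDiff {M : Type*} [Ring M] (U : M[X]) : M[X] :=
  derivative (derivative U) - 2 * (X * derivative U)

lemma hermiteDiff_mul {M : Type*} [Ring M] (U V : M[X]) :
    hermiteDiff (U * V) =
      hermiteDiff U * V + 2 * (derivative U * derivative V) + U * hermiteDiff V := by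
  have hV : U * hermiteDiff V =
      U * derivative (derivative V) - 2 * (X * (U * derivative V)) := by
    rw [← mul_assoc X, X_mul, hermiteDiff]
    noncomm_ring
  rw [hV]
  simp only [hermiteDiff, derivative_mul, map_add]
  noncomm_ring

/-- The second-order operator having the MVOPs as eigenfunctions up to lower degree: right
multiplication by `L` turns it into `hermiteDiff` minus right multiplication by `2J`, for suitable
`A`, `J` and `L` (`hermiteOperator_mul`). -/
noncomputable def hermiteOperator {M : Type*} [Ring M] (A J : M) (U : M[X]) : M[X] :=
  hermiteDiff U + 2 * (derivative U * C A - U * C J)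

lemma hermiteOperator_mul {M : Type*} [Ring M] {A J : M} {L : M[X]}
    (hL : derivative L = C A * L) (hLJ : hermiteDiff L = 2 * (L * C J - C J * L)) (U : M[X]) :
    hermiteOperator A J U * L = hermiteDiff (U * L) - 2 * (U * L * C J) := by
  rw [hermiteOperator, hermiteDiff_mul, hLJ, hL]
  noncomm_ring

lemma coeff_hermiteOperator {M : Type*} [Ring M] (A J : M) {U : M[X]} {n k : ℕ}
    (hdeg : U.natDegree ≤ n) (hk : n ≤ k) :
    (hermiteOperator A J U).coeff k = -(2 * (U.coeff k * (k + J))) := by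
  have hvanish {l : ℕ} (hl : k < l) : U.coeff l = 0 :=
    coeff_eq_zero_of_natDegree_lt (hdeg.trans_lt (hk.trans_lt hl))
  have hX : (X * derivative U).coeff k = U.coeff k * k := by
    cases k with
    | zero => simp
    | succ k => simp [coeff_X_mul, coeff_derivative]
  simp only [hermiteOperator, hermiteDiff, two_mul, coeff_add, coeff_sub, coeff_mul_C, hX]
  simp only [coeff_derivative, hvanish (show k < k + 1 by omega),
    hvanish (show k < k + 1 + 1 by omega)]
  noncomm_ring

local notation "⟪" U "," V "⟫" => momentPairing gaussianMoment V U

variable {M : Type*} [Ring M] [StarRing M] [Algebra ℝ M] [StarModule ℝ M]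

lemma gaussianPairing_derivative (U V : M[X]) :
    ⟪derivative U - 2 * (X * U), V⟫ = -⟪U, derivative V⟫ := by
  induction U using Polynomial.induction_on' with
  | add U U' hU hU' =>
    rw [map_add (momentPairing gaussianMoment _), neg_add, ← hU, ← hU', ← map_add]
    congr 1
    rw [derivative_add]
    noncomm_ring
  | monomial k a =>
    induction V using Polynomial.induction_on' with
    | add V V' hV hV' => simp only [map_add, momentPairing_add_right, hV, hV', neg_add]
    | monomial l b =>
      have hmoment : k * gaussianMoment (k - 1 + l) - 2 * gaussianMoment (k + 1 + l) =
          -(l * gaussianMoment (k + (l - 1))) := by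
        rw [add_right_comm, two_mul_gaussianMoment_succ (k + l)]
        rcases k with _ | k
        · simp
        · rcases l with _ | l
          · simp
          · simp only [← add_assoc, add_right_comm, Nat.add_sub_cancel]
            push_cast
            ring
      have hcast (j : ℕ) (c : M) : c * j = (j : ℝ) • c := by
        rw [Nat.cast_smul_eq_nsmul, nsmul_eq_mul']
      simp only [derivative_monomial, two_mul, X_mul_monomial, map_sub, map_add,
        momentPairing_monomial, hcast, star_smul, star_trivial, smul_mul_assoc, mul_smul_comm,
        smul_smul, ← sub_smul, ← add_smul, ← neg_smul]
      congr 1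
      linear_combination hmoment

lemma gaussianPairing_hermiteDiff (U V : M[X]) :
    ⟪hermiteDiff U, V⟫ = -⟪derivative U, derivative V⟫ :=
  gaussianPairing_derivative (derivative U) V

lemma isSelfAdjoint_gaussianPairing_hermiteDiff_sub {J : M} (hJ : IsSelfAdjoint J) (U : M[X]) :
    IsSelfAdjoint ⟪hermiteDiff U - 2 * (U * C J), U⟫ := by
  rw [map_sub, gaussianPairing_hermiteDiff, two_mul, map_add]
  have hUJ : IsSelfAdjoint ⟪U * C J, U⟫ := by
    rw [IsSelfAdjoint, star_momentPairing, momentPairing_mul_C_left, hJ.star_eq]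
  exact (IsSelfAdjoint.neg (star_momentPairing _ _ _)).sub (hUJ.add hUJ)

theorem commute_gaussianPairing_self {P : ℕ → M[X]} (hdeg : ∀ k, (P k).natDegree ≤ k)
    (hlead : ∀ k, (P k).coeff k = 1) {A J : M} {L : M[X]} (hJ : IsSelfAdjoint J)
    (hL : derivative L = C A * L) (hLJ : hermiteDiff L = 2 * (L * C J - C J * L)) {n : ℕ}
    (horth : ∀ k < n, ⟪P k * L, P n * L⟫ = 0) : Commute J ⟪P n * L, P n * L⟫ := by
  set H := ⟪P n * L, P n * L⟫
  set Γ : M := -(2 * (n + J)) with hΓ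
  have hlower : (hermiteOperator A J (P n) - Γ • P n).degree < n := by
    rw [degree_lt_iff_coeff_zero]
    intro k hk
    rw [coeff_sub, coeff_smul, coeff_hermiteOperator A J (hdeg n) hk]
    rcases hk.eq_or_lt with rfl | hk
    · simp [hlead, hΓ]
    · simp [coeff_eq_zero_of_natDegree_lt ((hdeg n).trans_lt hk)]
  have heigen : ⟪hermiteOperator A J (P n) * L, P n * L⟫ = Γ * H := by
    have h := momentPairing_mul_eq_zero_of_degree_lt _ hdeg hlead horth hlower
    rwa [sub_mul, map_sub, smul_mul_assoc, map_smul, smul_eq_mul, sub_eq_zero] at h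
  have hHsa : IsSelfAdjoint H := star_momentPairing _ _ _
  have hΓsa : IsSelfAdjoint Γ := by
    simp [Γ, IsSelfAdjoint, hJ.star_eq, two_mul]
  have hΓH : Commute Γ H := by
    rw [hΓsa.commute_iff hHsa, ← heigen, hermiteOperator_mul hL hLJ]
    exact isSelfAdjoint_gaussianPairing_hermiteDiff_sub hJ _
  have hJΓ : J = -((2⁻¹ : ℝ) • Γ) - n := by
    rw [hΓ, two_mul, ← two_smul ℝ]
    simp
  rw [hJΓ]
  exact ((hΓH.smul_left _).neg_left).sub_left (Nat.cast_commute n H)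

end HermiteOperator

section HermiteSeries

/-- The physicists' Hermite polynomials as elements of `ℝ[X]`; `Polynomial.hermite` is the
probabilists' version. -/
noncomputable def hermitePoly : ℕ → ℝ[X]
  | 0 => 1
  | 1 => 2 * X
  | m + 2 => 2 * X * hermitePoly (m + 1) - 2 * ((m : ℝ[X]) + 1) * hermitePoly m

lemma eval_hermitePoly (m : ℕ) (x : ℝ) : (hermitePoly m).eval x = hermiteF m x := by
  induction m using Nat.twoStepInduction with
  | zero => simp [hermitePoly, hermiteF]
  | one => simp [hermitePoly, hermiteF]
  | more m h₀ h₁ => simp [hermitePoly, hermiteF, h₀, h₁]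

lemma derivative_hermitePoly_succ (m : ℕ) :
    derivative (hermitePoly (m + 1)) = 2 * (m + 1) * hermitePoly m := by
  induction m using Nat.twoStepInduction with
  | zero => simp [hermitePoly]
  | one =>
    simp only [hermitePoly, Nat.cast_zero, Nat.cast_one, zero_add, mul_one, derivative_sub,
      derivative_mul, derivative_ofNat, zero_mul, derivative_X, sub_zero]
    ring
  | more m h₀ h₁ =>
    rw [hermitePoly]
    simp only [derivative_sub, derivative_mul, h₀, h₁, derivative_X, derivative_ofNat,
      derivative_add, derivative_natCast, derivative_one]
    rw [hermitePoly]
    push_cast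
    ring

lemma hermiteDiff_hermitePoly (m : ℕ) :
    hermiteDiff (hermitePoly m) = -(2 * m * hermitePoly m) := by
  match m with
  | 0 => simp [hermiteDiff, hermitePoly]
  | 1 =>
    simp only [hermiteDiff, hermitePoly, Nat.cast_one, derivative_mul, derivative_ofNat, zero_mul,
      derivative_X, mul_one, zero_add, zero_sub]
    ring
  | m + 2 =>
    simp only [hermiteDiff, derivative_hermitePoly_succ, derivative_mul, derivative_add,
      derivative_natCast, derivative_ofNat, derivative_one]
    rw [hermitePoly]
    push_cast
    ring

/-- The Hermite polynomial `H_m / (2^m m!)`, normalized to form an Appell sequence. -/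
noncomputable def appellHermite (m : ℕ) : ℝ[X] :=
  C (2 ^ m * m.factorial : ℝ)⁻¹ * hermitePoly m

lemma derivative_appellHermite_succ (m : ℕ) :
    derivative (appellHermite (m + 1)) = appellHermite m := by
  have hfac : (C (2 ^ (m + 1) * (m + 1).factorial : ℝ)⁻¹ : ℝ[X]) * (2 * (m + 1)) =
      C (2 ^ m * m.factorial : ℝ)⁻¹ := by
    rw [← C_ofNat, ← C_eq_natCast, ← C_1, ← C_add, ← C_mul, ← C_mul, Nat.factorial_succ]
    congr 1
    push_cast
    field_simp
    ring
  rw [appellHermite, derivative_C_mul, derivative_hermitePoly_succ, appellHermite, ← hfac]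
  ring

lemma hermiteDiff_appellHermite (m : ℕ) :
    hermiteDiff (appellHermite m) = -(2 * m * appellHermite m) := by
  have h := hermiteDiff_hermitePoly m
  rw [hermiteDiff] at h
  simp only [hermiteDiff, appellHermite, derivative_C_mul]
  linear_combination C (2 ^ m * m.factorial : ℝ)⁻¹ * h

lemma mul_pow_sub_pow_mul {M : Type*} [Ring M] {A J : M} (hJA : J * A - A * J = A) (m : ℕ) :
    J * A ^ m - A ^ m * J = m • A ^ m := by
  induction m with
  | zero => simp
  | succ m ih =>
    calc J * A ^ (m + 1) - A ^ (m + 1) * J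
        = (J * A ^ m - A ^ m * J) * A + A ^ m * (J * A - A * J) := by noncomm_ring
      _ = (m + 1) • A ^ (m + 1) := by rw [ih, hJA, smul_mul_assoc, ← pow_succ, succ_nsmul]

attribute [local instance] Polynomial.algebra

variable {M : Type*} [Ring M] [Algebra ℝ M]

lemma derivative_polynomial_smul (p : ℝ[X]) (U : M[X]) :
    derivative (p • U) = derivative p • U + p • derivative U := by
  simp [Algebra.smul_def, derivative_map]

lemma hermiteDiff_polynomial_smul_C (p : ℝ[X]) (c : M) :
    hermiteDiff (p • C c) = hermiteDiff p • C c := by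
  simp [hermiteDiff, Algebra.smul_def, sub_mul, mul_assoc]

/-- The Hermite generating series `∑ₘ H_m / (2^m m!) A^m`, truncated at `n` terms; this is the
abstract form of the factor `L` of the weight, where `A^n = 0`. -/
noncomputable def hermiteSeries (n : ℕ) (A : M) : M[X] :=
  ∑ m ∈ range n, appellHermite m • C (A ^ m)

lemma derivative_hermiteSeries {n : ℕ} {A : M} (hA : A ^ n = 0) :
    derivative (hermiteSeries n A) = C A * hermiteSeries n A := by
  cases n with
  | zero => simp [hermiteSeries]
  | succ n =>
    have hlast : C A * appellHermite n • C (A ^ n) = 0 := by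
      rw [mul_smul_comm, ← C_mul, ← pow_succ', hA, C_0, smul_zero]
    have hfirst : derivative (appellHermite 0 • C (A ^ 0)) = 0 := by
      simp [appellHermite, hermitePoly]
    rw [hermiteSeries, derivative_sum, Finset.sum_range_succ', hfirst, Finset.mul_sum,
      Finset.sum_range_succ, hlast]
    congr 1
    refine Finset.sum_congr rfl fun m _ => ?_
    rw [derivative_polynomial_smul, derivative_C, smul_zero, add_zero,
      derivative_appellHermite_succ, mul_smul_comm, ← C_mul, ← pow_succ']

lemma hermiteDiff_hermiteSeries {A J : M} (hJA : J * A - A * J = A) (n : ℕ) :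
    hermiteDiff (hermiteSeries n A) =
      2 * (hermiteSeries n A * C J - C J * hermiteSeries n A) := by
  have hterm (m : ℕ) : hermiteDiff (appellHermite m • C (A ^ m)) =
      2 * ((appellHermite m • C (A ^ m)) * C J - C J * (appellHermite m • C (A ^ m))) := by
    rw [hermiteDiff_polynomial_smul_C, hermiteDiff_appellHermite, smul_mul_assoc, mul_smul_comm,
      ← smul_sub, ← C_mul, ← C_mul, ← C_sub, ← neg_sub (J * _), mul_pow_sub_pow_mul hJA]
    simp only [map_neg, smul_neg, mul_neg, neg_smul, neg_inj]
    rw [mul_assoc, two_mul, add_smul, two_mul, mul_smul, Nat.cast_smul_eq_nsmul, map_nsmul,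
      smul_comm]
  calc hermiteDiff (hermiteSeries n A)
      = ∑ m ∈ range n, hermiteDiff (appellHermite m • C (A ^ m)) := by
        simp [hermiteSeries, hermiteDiff, Finset.mul_sum]
    _ = 2 * (hermiteSeries n A * C J - C J * hermiteSeries n A) := by
        simp only [hterm, hermiteSeries]
        rw [Finset.sum_mul, Finset.mul_sum, ← Finset.sum_sub_distrib, Finset.mul_sum]

end HermiteSeries

section RealEvaluation

variable {M : Type*} [Ring M] [Algebra ℝ M]

lemma eval_algebraMap_mul (U V : M[X]) (x : ℝ) :
    (U * V).eval (algebraMap ℝ M x) =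
      U.eval (algebraMap ℝ M x) * V.eval (algebraMap ℝ M x) :=
  eval₂_mul_noncomm _ _ fun _ => (Algebra.commutes x _).symm

attribute [local instance] Polynomial.algebra in
lemma eval_algebraMap_polynomial_smul (p : ℝ[X]) (U : M[X]) (x : ℝ) :
    (p • U).eval (algebraMap ℝ M x) = p.eval x • U.eval (algebraMap ℝ M x) := by
  rw [Algebra.smul_def, eval_algebraMap_mul, Algebra.smul_def]
  simp [aeval_algebraMap_apply]

lemma eval_algebraMap_eq_sum (U : M[X]) (x : ℝ) :
    U.eval (algebraMap ℝ M x) = U.sum fun k a => x ^ k • a := by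
  simp only [eval_eq_sum, ← map_pow, ← Algebra.commutes, ← Algebra.smul_def]

lemma integral_exp_smul_map_eval_mul_star_eval [StarRing M] [StarModule ℝ M]
    {E : Type*} [NormedAddCommGroup E] [NormedSpace ℝ E] [CompleteSpace E] (φ : M →ₗ[ℝ] E)
    (U V : M[X]) :
    ∫ x : ℝ, Real.exp (-x ^ 2) • φ (U.eval (algebraMap ℝ M x) * star (V.eval (algebraMap ℝ M x))) =
      φ (momentPairing gaussianMoment V U) := by
  have hint (k l : ℕ) (e : E) :
      Integrable fun x : ℝ => (x ^ (k + l) * Real.exp (-x ^ 2)) • e :=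
    (integrable_pow_mul_exp_neg_sq (k + l)).smul_const e
  have hexpand (x : ℝ) :
      Real.exp (-x ^ 2) • φ (U.eval (algebraMap ℝ M x) * star (V.eval (algebraMap ℝ M x))) =
        ∑ k ∈ U.support, ∑ l ∈ V.support,
          (x ^ (k + l) * Real.exp (-x ^ 2)) • φ (U.coeff k * star (V.coeff l)) := by
    simp only [eval_algebraMap_eq_sum, Polynomial.sum_def, star_sum, star_smul, star_trivial,
      Finset.sum_mul_sum, smul_mul_smul_comm, map_sum, map_smul, Finset.smul_sum, smul_smul,
      ← pow_add, mul_comm]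
  simp only [hexpand, momentPairing_eq_sum, Polynomial.sum_def, map_sum, map_smul, gaussianMoment]
  rw [integral_finsetSum _ fun k _ => integrable_finsetSum _ fun l _ => hint k l _]
  refine Finset.sum_congr rfl fun k _ => ?_
  rw [integral_finsetSum _ fun l _ => hint k l _]
  exact Finset.sum_congr rfl fun l _ => integral_smul_const _ _

end RealEvaluation

section DiagonalMatrix

variable {ι R : Type*} [Fintype ι]

lemma isDiag_of_commute_diagonal [DecidableEq ι] [CommRing R] [NoZeroDivisors R] {d : ι → R}
    (hd : Function.Injective d) {A : Matrix ι ι R} (hA : Commute (diagonal d) A) : A.IsDiag := by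
  intro i j hij
  have hentry : d i * A i j = A i j * d j := by
    simpa only [diagonal_mul, mul_diagonal] using congr_fun₂ hA.eq i j
  rw [mul_comm, ← sub_eq_zero, ← mul_sub] at hentry
  exact (mul_eq_zero.mp hentry).resolve_right (sub_ne_zero.mpr (hd.ne hij))

lemma isDiag_mul [NonUnitalNonAssocSemiring R] {A B : Matrix ι ι R} (hA : A.IsDiag)
    (hB : B.IsDiag) : (A * B).IsDiag := by
  classical
  rw [← hA.diagonal_diag, ← hB.diagonal_diag, diagonal_mul_diagonal]
  exact isDiag_diagonal _

lemma isDiag_inv [DecidableEq ι] [CommRing R] {A : Matrix ι ι R} (hA : A.IsDiag) : A⁻¹.IsDiag := by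
  rw [← hA.diagonal_diag, inv_diagonal]
  exact isDiag_diagonal _

end DiagonalMatrix

section HermiteWeight

variable {N : ℕ} {α : Fin N → ℝ}

lemma Amat_apply (j k : Fin N) :
    Amat N α j k = if (j : ℕ) = k + 1 then ((2 * α j / α k : ℝ) : ℂ) else 0 :=
  rfl

lemma Amat_pow_apply (hα : ∀ j, α j ≠ 0) (m : ℕ) (j k : Fin N) :
    (Amat N α ^ m) j k = if (j : ℕ) = k + m then ((2 ^ m * α j / α k : ℝ) : ℂ) else 0 := by
  induction m generalizing j with
  | zero =>
    by_cases h : j = k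
    · simp [h, hα]
    · simp [h, Fin.val_inj]
  | succ m ih =>
    simp only [pow_succ', mul_apply, Amat_apply, ih]
    by_cases h : (j : ℕ) = k + (m + 1)
    · rw [Finset.sum_eq_single ⟨k + m, by omega⟩]
      · have := hα ⟨k + m, by omega⟩
        simp only [h, ← add_assoc, if_true, ← Complex.ofReal_mul]
        congr 1
        field_simp
      · grind
      · simp
    · rw [if_neg h]
      exact Finset.sum_eq_zero fun i _ => by grind

lemma Amat_pow_card (hα : ∀ j, α j ≠ 0) : Amat N α ^ N = 0 := by
  ext j k
  rw [Amat_pow_apply hα, if_neg (by omega), Matrix.zero_apply]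

lemma Jmat_mul_Amat_sub : Jmat N * Amat N α - Amat N α * Jmat N = Amat N α := by
  ext j k
  rw [Jmat, Matrix.sub_apply, diagonal_mul, mul_diagonal]
  by_cases h : (j : ℕ) = k + 1
  · simp only [Amat_apply, h, if_true, Nat.cast_add, Nat.cast_one]
    ring
  · simp [Amat_apply, h]

lemma isSelfAdjoint_Jmat : IsSelfAdjoint (Jmat N) := by
  simp [IsSelfAdjoint, Jmat, star_eq_conjTranspose, diagonal_conjTranspose, Pi.star_def]

lemma eval_hermiteSeries_Amat (hα : ∀ j, α j ≠ 0) (x : ℝ) :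
    (hermiteSeries N (Amat N α)).eval (algebraMap ℝ _ x) = Lmat N α x := by
  have hterm (m : ℕ) (j k : Fin N) :
      ((appellHermite m).eval x • Amat N α ^ m) j k =
        if (j : ℕ) = k + m then ((hermiteF m x / m.factorial * (α j / α k) : ℝ) : ℂ) else 0 := by
    rw [Matrix.smul_apply, Amat_pow_apply hα, smul_ite, smul_zero, appellHermite, eval_C_mul,
      eval_hermitePoly, Complex.real_smul, ← Complex.ofReal_mul]
    congr 2
    field_simp
  ext j k
  simp only [hermiteSeries, eval_finsetSum, eval_algebraMap_polynomial_smul, eval_C,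
    Matrix.sum_apply, hterm, Lmat, of_apply]
  split_ifs with h
  · rw [Finset.sum_eq_single_of_mem (j - k : ℕ) (by grind) (by grind), if_pos (by omega)]
  · exact Finset.sum_eq_zero fun m _ => if_neg (by omega)

lemma matIP_hermW_eval (hα : ∀ j, α j ≠ 0) (U V : (Matrix (Fin N) (Fin N) ℂ)[X]) :
    matIP N (hermW N α) (fun x => U.eval (algebraMap ℝ _ x)) (fun x => V.eval (algebraMap ℝ _ x)) =
      momentPairing gaussianMoment (V * hermiteSeries N (Amat N α))
        (U * hermiteSeries N (Amat N α)) := by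
  ext i j
  have h := integral_exp_smul_map_eval_mul_star_eval (entryLinearMap ℝ ℂ i j)
    (U * hermiteSeries N (Amat N α)) (V * hermiteSeries N (Amat N α))
  simp only [eval_algebraMap_mul, eval_hermiteSeries_Amat hα, entryLinearMap_apply] at h
  rw [← h]
  simp only [matIP, matInt, of_apply, hermW, star_eq_conjTranspose, conjTranspose_mul,
    Matrix.mul_smul, Matrix.smul_mul, Matrix.smul_apply, Matrix.mul_assoc]

lemma IsMonicMatPoly.exists_polynomial {n : ℕ} {F : ℝ → Matrix (Fin N) (Fin N) ℂ}
    (hF : IsMonicMatPoly N n F) :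
    ∃ U : (Matrix (Fin N) (Fin N) ℂ)[X], U.natDegree ≤ n ∧ U.coeff n = 1 ∧
      F = fun x => U.eval (algebraMap ℝ _ x) := by
  obtain ⟨c, hc, hF⟩ := hF
  refine ⟨∑ k ∈ range (n + 1), monomial k (c k), ?_, ?_, ?_⟩
  · exact natDegree_sum_le_of_forall_le _ _ fun k hk => (natDegree_monomial_le _).trans (by grind)
  · simp [coeff_monomial, hc]
  · funext x
    simp only [hF, eval_finsetSum, eval_monomial, ← map_pow, ← Algebra.commutes,
      ← Algebra.smul_def, ← Complex.ofReal_pow, Complex.coe_smul]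

theorem isDiag_matIP_hermW (hα : ∀ j, α j ≠ 0) {P : ℕ → ℝ → Matrix (Fin N) (Fin N) ℂ}
    (hPmonic : ∀ n, IsMonicMatPoly N n (P n)) {n : ℕ}
    (hPorth : ∀ k < n, matIP N (hermW N α) (P k) (P n) = 0) :
    (matIP N (hermW N α) (P n) (P n)).IsDiag := by
  choose U hdeg hlead hP using fun n => (hPmonic n).exists_polynomial
  simp only [hP, matIP_hermW_eval hα] at hPorth ⊢
  have hJ : Function.Injective fun j : Fin N => ((j : ℕ) + 1 : ℂ) := fun j k h =>
    Fin.ext (by simpa using h)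
  exact isDiag_of_commute_diagonal hJ <| commute_gaussianPairing_self hdeg hlead isSelfAdjoint_Jmat
    (derivative_hermiteSeries (Amat_pow_card hα)) (hermiteDiff_hermiteSeries Jmat_mul_Amat_sub N)
    hPorth

end HermiteWeight

theorem hermite_norms_are_diagonal_general {N : ℕ} {α : Fin N → ℝ} (hα : ∀ j, α j ≠ 0)
    {P : ℕ → ℝ → Matrix (Fin N) (Fin N) ℂ} (hPmonic : ∀ n, IsMonicMatPoly N n (P n))
    (hPorth : ∀ n m, n ≠ m → matIP N (hermW N α) (P n) (P m) = 0) :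
    (∀ n : ℕ, (matIP N (hermW N α) (P n) (P n)).IsDiag) ∧
      ∀ n : ℕ, 1 ≤ n →
        (matIP N (hermW N α) (P n) (P n) *
          (matIP N (hermW N α) (P (n - 1)) (P (n - 1)))⁻¹).IsDiag := by
  have hdiag (n : ℕ) : (matIP N (hermW N α) (P n) (P n)).IsDiag :=
    isDiag_matIP_hermW hα hPmonic fun k hk => hPorth k n hk.ne
  exact ⟨hdiag, fun n _ => isDiag_mul (hdiag n) (isDiag_inv (hdiag (n - 1)))⟩

/-- **Diagonality of the squared norms** (Lemma 5.5 of the paper): for the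
Hermite-type weight `W(x) = e^{−x²}L(x)L(x)*`, the squared norms `ℋ(n)` of the
monic MVOPs and the recurrence coefficients `C(n) = ℋ(n)ℋ(n−1)⁻¹` are diagonal. -/
theorem hermite_norms_are_diagonal
    (N : ℕ) (hN : 1 ≤ N) (α : Fin N → ℝ) (hα : ∀ j, 0 < α j)
    (P : ℕ → ℝ → Matrix (Fin N) (Fin N) ℂ)
    (hPmonic : ∀ n, IsMonicMatPoly N n (P n))
    (hPorth : ∀ n m, n ≠ m → matIP N (hermW N α) (P n) (P m) = 0)
    (hHpos : ∀ n, (matIP N (hermW N α) (P n) (P n)).PosDef)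
    :
    (∀ n : ℕ, (matIP N (hermW N α) (P n) (P n)).IsDiag) ∧
    (∀ n : ℕ, 1 ≤ n →
      (matIP N (hermW N α) (P n) (P n) *
        (matIP N (hermW N α) (P (n - 1)) (P (n - 1)))⁻¹).IsDiag) :=
  hermite_norms_are_diagonal_general (fun j => (hα j).ne') hPmonic hPorth
end

section
/- Let P(·,n) be the monic MVOPs of the Hermite-type weight W(x) = e^{−x²}L(x)L(x)*. Then for all n ≥ 0 and all 1 ≤ k ≤ N, the last row of P(x,n)L(x) is given explicitly by (P(x,n)L(x))_{N,k} = (2^{−n}/(N−k)!)·(α_N/α_k)·H_{n+N−k}(x) for all x ∈ ℝ; i.e. the coefficients ξ(n,N,k) in the Hermite-function expansion of the entries equal 2^{−n} α_N / ((N−k)! α_k). -/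
open MeasureTheory Matrix Finset
open scoped ComplexOrder

/-!
For an operator `T` on polynomials write `e^{tT} f = ∑ₘ (Tᵐ f / m!) tᵐ`. With the raising operator
`T f = 2 X f - f'`, which generates the Hermite polynomials from `1`, the matrix `L` is, up to
conjugation by `diag α`, the lower triangular Toeplitz matrix of the series `e^{tT} 1`, and such
matrices multiply as their series do. Since `T (f g) = -f' g + f (T g)`, the Leibniz rule gives
`e^{tT} H_n = (e^{-tD} H_n) (e^{tT} 1)`. Hence the Toeplitz matrix `R_n` of
`2⁻ⁿ e^{-tD} H_n = 2⁻ⁿ H_n(x - t)` is a monic matrix polynomial of degree `n`, and `R_n L` is the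
Toeplitz matrix of `2⁻ⁿ e^{tT} H_n = 2⁻ⁿ ∑ₘ (H_{n+m} / m!) tᵐ`.

The `k`-th entry of the last row of `R_n L` is a multiple of `H_{n+N-k}`, whereas the `k`-th entry
of `v L` has degree less than `n + N - k` for every row `v` of degree less than `n`. So the last row
of `R_n` is orthogonal to all such `v`, as is the last row of `P(·, n)`. Their difference has degree
less than `n`, so it is orthogonal to itself, and vanishes.
-/

section ExponentialSeries

open scoped Nat

variable {K A : Type*}

theorem pow_apply_mul_of_leibniz [CommSemiring K] [Semiring A] [Algebra K A]
    {T T₁ T₂ : Module.End K A} (hT : ∀ f g, T (f * g) = T₁ f * g + f * T₂ g) (m : ℕ) (f g : A) :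
    (T ^ m) (f * g) = ∑ p ∈ antidiagonal m, m.choose p.1 • ((T₁ ^ p.1) f * (T₂ ^ p.2) g) := by
  induction m with
  | zero => simp
  | succ m ih =>
    rw [sum_antidiagonal_choose_succ_nsmul (fun i j => (T₁ ^ i) f * (T₂ ^ j) g) m, pow_succ',
      Module.End.mul_apply, ih, map_sum, ← sum_add_distrib]
    refine sum_congr rfl fun p hp => ?_
    rw [map_nsmul, hT, nsmul_add, add_comm, pow_succ', pow_succ', Module.End.mul_apply,
      Module.End.mul_apply, Nat.choose_symm_of_eq_add (mem_antidiagonal.mp hp).symm]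

variable [Field K] [Semiring A] [Algebra K A]

/-- The power series `e^{tT} f = ∑ₘ (Tᵐ f / m!) tᵐ`, the exponential generating function of the
orbit of `f` under the operator `T`. -/
noncomputable def endExpSeries (T : Module.End K A) (f : A) : PowerSeries A :=
  PowerSeries.mk fun m => (m ! : K)⁻¹ • (T ^ m) f

@[simp]
theorem coeff_endExpSeries (T : Module.End K A) (f : A) (m : ℕ) :
    PowerSeries.coeff m (endExpSeries T f) = (m ! : K)⁻¹ • (T ^ m) f :=
  PowerSeries.coeff_mk _ _

theorem endExpSeries_mul_of_leibniz [CharZero K] {T T₁ T₂ : Module.End K A}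
    (hT : ∀ f g, T (f * g) = T₁ f * g + f * T₂ g) (f g : A) :
    endExpSeries T (f * g) = endExpSeries T₁ f * endExpSeries T₂ g := by
  ext m
  simp only [PowerSeries.coeff_mul, coeff_endExpSeries, pow_apply_mul_of_leibniz hT, smul_sum]
  refine sum_congr rfl fun p hp => ?_
  obtain rfl := mem_antidiagonal.mp hp
  rw [smul_mul_smul_comm, ← Nat.cast_smul_eq_nsmul K, smul_smul, Nat.cast_add_choose]
  congr 1
  have := Nat.cast_ne_zero (R := K).mpr (p.1 + p.2).factorial_ne_zero
  field_simp

end ExponentialSeries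

section Toeplitz

variable {N : ℕ}

theorem sum_Icc_sub_sub_eq_sum_antidiagonal {M : Type*} [AddCommMonoid M] {i k : Fin N}
    (hki : k ≤ i) (f : ℕ → ℕ → M) :
    ∑ j ∈ Icc k i, f (i - j) (j - k) = ∑ p ∈ antidiagonal (i - k : ℕ), f p.1 p.2 := by
  refine sum_bij' (fun j _ => ((i - j : ℕ), (j - k : ℕ)))
    (fun p hp => ⟨p.2 + k, by grind [HasAntidiagonal.mem_antidiagonal]⟩) ?_ ?_ ?_ ?_ ?_ <;>
  grind [HasAntidiagonal.mem_antidiagonal]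

variable {K A : Type*} [Field K] [Semiring A] [Algebra K A]

/-- The lower triangular matrix with entries `(α i / α j) a_{i-j}`, where `a` is given by its
generating series: the lower triangular Toeplitz matrix of `a`, conjugated by `diag α`. -/
noncomputable def scaledToeplitz (α : Fin N → K) (a : PowerSeries A) : Matrix (Fin N) (Fin N) A :=
  Matrix.of fun i j => if j ≤ i then (α i / α j) • PowerSeries.coeff (i - j : ℕ) a else 0

theorem scaledToeplitz_apply (α : Fin N → K) (a : PowerSeries A) (i j : Fin N) :
    scaledToeplitz α a i j = if j ≤ i then (α i / α j) • PowerSeries.coeff (i - j : ℕ) a else 0 :=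
  rfl

theorem scaledToeplitz_mul {α : Fin N → K} (hα : ∀ i, α i ≠ 0) (a b : PowerSeries A) :
    scaledToeplitz α (a * b) = scaledToeplitz α a * scaledToeplitz α b := by
  ext i k
  have hterm (j : Fin N) : scaledToeplitz α a i j * scaledToeplitz α b j k =
      if j ∈ Icc k i then (α i / α k) •
        (PowerSeries.coeff (i - j : ℕ) a * PowerSeries.coeff (j - k : ℕ) b) else 0 := by
    simp only [scaledToeplitz_apply, ite_zero_mul_ite_zero, mem_Icc, and_comm, smul_mul_smul_comm,
      div_mul_div_cancel₀ (hα j)]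
  rw [Matrix.mul_apply, sum_congr rfl fun j _ => hterm j, sum_ite_mem, univ_inter, ← smul_sum,
    scaledToeplitz_apply]
  split_ifs with hki
  · rw [PowerSeries.coeff_mul, sum_Icc_sub_sub_eq_sum_antidiagonal hki fun p q =>
      PowerSeries.coeff p a * PowerSeries.coeff q b]
  · rw [Icc_eq_empty hki, sum_empty, smul_zero]

end Toeplitz

section Hermite

open Polynomial

variable (R : Type*) [CommRing R]

/-- The raising operator `f ↦ 2 X f - f'` of the Hermite polynomials. -/
noncomputable def hermiteRaising : Module.End R R[X] :=
  LinearMap.mulLeft R (2 * X) - derivative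

/-- The physicists' Hermite polynomials as polynomials over `R`, generated from `1` by the raising
operator. -/
noncomputable def physHermite (n : ℕ) : R[X] :=
  (hermiteRaising R ^ n) 1

variable {R}

theorem hermiteRaising_apply (f : R[X]) : hermiteRaising R f = 2 * X * f - derivative f :=
  rfl

theorem hermiteRaising_mul (f g : R[X]) :
    hermiteRaising R (f * g) =
      (-derivative : Module.End R R[X]) f * g + f * hermiteRaising R g := by
  simp only [hermiteRaising_apply, LinearMap.neg_apply, derivative_mul]
  ring

theorem derivative_hermiteRaising (f : R[X]) :
    derivative (hermiteRaising R f) = hermiteRaising R (derivative f) + 2 * f := by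
  simp only [hermiteRaising_apply, derivative_sub, derivative_mul, derivative_X, derivative_ofNat]
  ring

theorem natDegree_hermiteRaising_le (f : R[X]) :
    (hermiteRaising R f).natDegree ≤ f.natDegree + 1 := by
  refine (natDegree_sub_le _ _).trans (max_le ?_ ((natDegree_derivative_le f).trans (by omega)))
  rw [LinearMap.mulLeft_apply, ← C_ofNat, mul_assoc, add_comm]
  exact (natDegree_C_mul_le _ _).trans <|
    natDegree_mul_le.trans (Nat.add_le_add_right natDegree_X_le _)

theorem hermiteRaising_pow_physHermite (m n : ℕ) :
    (hermiteRaising R ^ m) (physHermite R n) = physHermite R (n + m) := by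
  rw [physHermite, physHermite, add_comm, pow_add, Module.End.mul_apply]

theorem physHermite_succ (n : ℕ) :
    physHermite R (n + 1) = hermiteRaising R (physHermite R n) := by
  rw [← hermiteRaising_pow_physHermite, pow_one]

theorem derivative_physHermite_succ (n : ℕ) :
    derivative (physHermite R (n + 1)) = (2 * (n + 1) : R) • physHermite R n := by
  induction n with
  | zero => simp [physHermite, hermiteRaising_apply, smul_eq_C_mul, C_ofNat]
  | succ n ih =>
    rw [physHermite_succ, derivative_hermiteRaising, ih, map_smul, ← physHermite_succ,
      smul_eq_C_mul, smul_eq_C_mul]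
    push_cast
    simp only [map_mul, map_add, map_one, C_ofNat]
    ring

theorem physHermite_add_two (n : ℕ) :
    physHermite R (n + 2) =
      2 * X * physHermite R (n + 1) - (2 * (n + 1) : R) • physHermite R n := by
  rw [physHermite_succ, hermiteRaising_apply, derivative_physHermite_succ]

theorem natDegree_physHermite_le (n : ℕ) : (physHermite R n).natDegree ≤ n := by
  induction n with
  | zero => simp [physHermite]
  | succ n ih =>
    rw [physHermite_succ]
    exact (natDegree_hermiteRaising_le _).trans (by omega)

theorem coeff_physHermite_self (n : ℕ) : (physHermite R n).coeff n = 2 ^ n := by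
  induction n with
  | zero => simp [physHermite]
  | succ n ih =>
    have hderiv : (derivative (physHermite R n)).coeff (n + 1) = 0 :=
      coeff_eq_zero_of_natDegree_lt <| (natDegree_derivative_le _).trans_lt <| by
        have := natDegree_physHermite_le (R := R) n
        omega
    rw [physHermite_succ, hermiteRaising_apply, coeff_sub, hderiv, sub_zero, mul_assoc, ← C_ofNat,
      coeff_C_mul, coeff_X_mul, ih, pow_succ']

theorem eval_physHermite (m : ℕ) (x : ℝ) :
    (physHermite ℂ m).eval (x : ℂ) = (hermiteF m x : ℂ) := by
  induction m using Nat.twoStepInduction with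
  | zero => simp [physHermite, hermiteF]
  | one => simp [physHermite, hermiteRaising_apply, hermiteF]
  | more m ih ih' => simp [physHermite_add_two, hermiteF, ih, ih']

theorem coeff_neg_derivative_pow_eq_zero {p : R[X]} {d m : ℕ} (h : p.natDegree < d + m) :
    (((-derivative : Module.End R R[X]) ^ m) p).coeff d = 0 := by
  have hcoeff : (((derivative : Module.End R R[X]) ^ m) p).coeff d = 0 := by
    rw [Module.End.pow_apply, coeff_iterate_derivative, coeff_eq_zero_of_natDegree_lt h, smul_zero]
  rw [neg_pow (derivative : Module.End R R[X])]
  rcases neg_one_pow_eq_or (Module.End R R[X]) m with hsign | hsign <;> rw [hsign] <;>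
    simpa using hcoeff

theorem endExpSeries_physHermite {K : Type*} [Field K] [CharZero K] (n : ℕ) :
    endExpSeries (hermiteRaising K) (physHermite K n) =
      endExpSeries (-derivative) (physHermite K n) * endExpSeries (hermiteRaising K) 1 := by
  rw [← endExpSeries_mul_of_leibniz hermiteRaising_mul, mul_one]

end Hermite

section Gaussian

open Polynomial

theorem integrable_exp_neg_sq_mul_eval (p : ℂ[X]) :
    Integrable fun y : ℝ => (Real.exp (-y ^ 2) : ℂ) * p.eval (y : ℂ) := by
  induction p using Polynomial.induction_on' with
  | add p q hp hq =>
    simp only [eval_add, mul_add]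
    exact hp.add hq
  | monomial n a =>
    have hpow : Integrable fun y : ℝ => y ^ n * Real.exp (-y ^ 2) := by
      simpa using integrable_rpow_mul_exp_neg_mul_sq one_pos (s := n)
        (neg_one_lt_zero.trans_le n.cast_nonneg)
    refine (hpow.ofReal (𝕜 := ℂ).const_mul a).congr (.of_forall fun y => ?_)
    simp only [eval_monomial, RCLike.ofReal_eq_complex_ofReal, Complex.ofReal_mul,
      Complex.ofReal_pow]
    ring

/-- Integration of a polynomial against the Gaussian weight `e^{-y²}` on the real line. -/
noncomputable def gaussianIntegral : ℂ[X] →ₗ[ℂ] ℂ where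
  toFun p := ∫ y : ℝ, (Real.exp (-y ^ 2) : ℂ) * p.eval (y : ℂ)
  map_add' p q := by
    simp only [eval_add, mul_add]
    exact integral_add (integrable_exp_neg_sq_mul_eval p) (integrable_exp_neg_sq_mul_eval q)
  map_smul' a p := by
    simp only [eval_smul, smul_eq_mul, mul_left_comm _ a, integral_const_mul, RingHom.id_apply]

theorem gaussianIntegral_apply (p : ℂ[X]) :
    gaussianIntegral p = ∫ y : ℝ, (Real.exp (-y ^ 2) : ℂ) * p.eval (y : ℂ) :=
  rfl

theorem gaussianIntegral_hermiteRaising (f : ℂ[X]) :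
    gaussianIntegral (hermiteRaising ℂ f) = 0 := by
  rw [← neg_eq_zero, ← map_neg, gaussianIntegral_apply]
  refine integral_eq_zero_of_hasDerivAt_of_integrable (fun y => ?_)
    (integrable_exp_neg_sq_mul_eval _) (integrable_exp_neg_sq_mul_eval f)
  have hexp : HasDerivAt (fun y : ℝ => Real.exp (-y ^ 2)) (Real.exp (-y ^ 2) * (-(2 * y))) y := by
    simpa using (hasDerivAt_pow 2 y).neg.exp
  refine (hexp.ofReal_comp.mul (f.hasDerivAt (y : ℂ)).comp_ofReal).congr_deriv ?_
  simp only [hermiteRaising_apply, eval_neg, eval_sub, eval_mul, eval_ofNat, eval_X,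
    Complex.ofReal_mul, Complex.ofReal_neg, Complex.ofReal_ofNat]
  ring

theorem gaussianIntegral_hermiteRaising_mul (f g : ℂ[X]) :
    gaussianIntegral (hermiteRaising ℂ f * g) = gaussianIntegral (f * derivative g) := by
  have hsplit : hermiteRaising ℂ f * g = hermiteRaising ℂ (f * g) + f * derivative g := by
    simp only [hermiteRaising_apply, derivative_mul]
    ring
  rw [hsplit, map_add, gaussianIntegral_hermiteRaising, zero_add]

theorem gaussianIntegral_hermiteRaising_pow_mul (m : ℕ) (f g : ℂ[X]) :
    gaussianIntegral ((hermiteRaising ℂ ^ m) f * g) =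
      gaussianIntegral (f * derivative^[m] g) := by
  induction m generalizing g with
  | zero => simp
  | succ m ih =>
    rw [pow_succ', Module.End.mul_apply, gaussianIntegral_hermiteRaising_mul, ih,
      Function.iterate_succ_apply]

theorem gaussianIntegral_physHermite_mul_eq_zero {m : ℕ} {g : ℂ[X]} (hg : g.degree < m) :
    gaussianIntegral (physHermite ℂ m * g) = 0 := by
  rw [physHermite, gaussianIntegral_hermiteRaising_pow_mul,
    iterate_derivative_eq_zero_of_degree_lt hg, mul_zero, map_zero]

theorem eval_ofReal_map_conj (p : ℂ[X]) (y : ℝ) :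
    (p.map (starRingEnd ℂ)).eval (y : ℂ) = starRingEnd ℂ (p.eval (y : ℂ)) := by
  rw [← Complex.conj_ofReal y, eval_map_apply, Complex.conj_ofReal]

theorem gaussianIntegral_mul_map_conj (p : ℂ[X]) :
    gaussianIntegral (p * p.map (starRingEnd ℂ)) =
      ((∫ y : ℝ, Real.exp (-y ^ 2) * Complex.normSq (p.eval (y : ℂ)) : ℝ) : ℂ) := by
  simp only [gaussianIntegral_apply, eval_mul, eval_ofReal_map_conj, Complex.mul_conj,
    ← Complex.ofReal_mul, integral_complex_ofReal]

theorem gaussianIntegral_mul_map_conj_nonneg (p : ℂ[X]) :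
    0 ≤ gaussianIntegral (p * p.map (starRingEnd ℂ)) := by
  rw [gaussianIntegral_mul_map_conj, Complex.zero_le_real]
  exact integral_nonneg fun y => mul_nonneg (Real.exp_nonneg _) (Complex.normSq_nonneg _)

theorem eq_zero_of_forall_eval_ofReal_eq_zero {p : ℂ[X]} (hp : ∀ y : ℝ, p.eval (y : ℂ) = 0) :
    p = 0 :=
  eq_zero_of_infinite_isRoot p <|
    (Set.infinite_range_of_injective Complex.ofReal_injective).mono (Set.range_subset_iff.mpr hp)

theorem gaussianIntegral_mul_map_conj_eq_zero {p : ℂ[X]}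
    (hp : gaussianIntegral (p * p.map (starRingEnd ℂ)) = 0) : p = 0 := by
  let f : ℝ → ℝ := fun y => Real.exp (-y ^ 2) * Complex.normSq (p.eval (y : ℂ))
  have hf_nonneg : 0 ≤ f := fun y => mul_nonneg (Real.exp_nonneg _) (Complex.normSq_nonneg _)
  have hf_cont : Continuous f := .mul (by fun_prop) <|
    Complex.continuous_normSq.comp (p.continuous.comp Complex.continuous_ofReal)
  have hf_int : Integrable f := by
    simpa [f, -Complex.ofReal_exp, eval_ofReal_map_conj, Complex.mul_conj,
      ← Complex.ofReal_mul] using (integrable_exp_neg_sq_mul_eval (p * p.map (starRingEnd ℂ))).re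
  rw [gaussianIntegral_mul_map_conj, Complex.ofReal_eq_zero,
    integral_eq_zero_iff_of_nonneg hf_nonneg hf_int,
    hf_cont.ae_eq_iff_eq volume continuous_zero] at hp
  refine eq_zero_of_forall_eval_ofReal_eq_zero fun y => Complex.normSq_eq_zero.mp ?_
  exact (mul_eq_zero.mp (congrFun hp y)).resolve_left (Real.exp_ne_zero _)

variable {ι : Type*} [Fintype ι]

/-- The Hermitian form `∫ e^{-y²} ∑ₖ uₖ(y) conj (vₖ(y)) dy` on tuples of polynomials. -/
noncomputable def gaussianForm : (ι → ℂ[X]) →ₗ[ℂ] (ι → ℂ[X]) →ₗ⋆[ℂ] ℂ :=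
  LinearMap.mk₂'ₛₗ (RingHom.id ℂ) (starRingEnd ℂ)
    (fun u v => ∑ k, gaussianIntegral (u k * (v k).map (starRingEnd ℂ)))
    (fun u u' v => by simp [add_mul, sum_add_distrib])
    (fun a u v => by simp [mul_sum])
    (fun u v v' => by simp [mul_add, sum_add_distrib])
    (fun a u v => by simp [mul_sum, Polynomial.map_smul])

theorem gaussianForm_apply (u v : ι → ℂ[X]) :
    gaussianForm u v = ∑ k, gaussianIntegral (u k * (v k).map (starRingEnd ℂ)) :=
  rfl

theorem gaussianForm_self_eq_zero {u : ι → ℂ[X]} (hu : gaussianForm u u = 0) : u = 0 := by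
  rw [gaussianForm_apply,
    sum_eq_zero_iff_of_nonneg fun k _ => gaussianIntegral_mul_map_conj_nonneg (u k)] at hu
  exact funext fun k => gaussianIntegral_mul_map_conj_eq_zero (hu k (mem_univ k))

end Gaussian

section MonicPolyMatrix

open Polynomial

variable {ι R : Type*} [DecidableEq ι] [CommRing R]

/-- `p` is a matrix polynomial of degree `n` with leading coefficient the identity, given as a
matrix with polynomial entries. -/
structure IsMonicPolyMatrix (n : ℕ) (p : Matrix ι ι R[X]) : Prop where
  natDegree_le (i j : ι) : (p i j).natDegree ≤ n
  coeff_self (i j : ι) : (p i j).coeff n = (1 : Matrix ι ι R) i j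

theorem IsMonicPolyMatrix.degree_sub_lt {n : ℕ} {p q : Matrix ι ι R[X]}
    (hp : IsMonicPolyMatrix n p) (hq : IsMonicPolyMatrix n q) (i j : ι) :
    ((p - q) i j).degree < n := by
  refine (degree_lt_iff_coeff_zero _ _).mpr fun m hm => ?_
  rw [Matrix.sub_apply, coeff_sub]
  rcases hm.eq_or_lt with rfl | hm
  · rw [hp.coeff_self, hq.coeff_self, sub_self]
  · rw [coeff_eq_zero_of_natDegree_lt ((hp.natDegree_le i j).trans_lt hm),
      coeff_eq_zero_of_natDegree_lt ((hq.natDegree_le i j).trans_lt hm), sub_self]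

theorem mem_span_rows_of_degree_lt [Finite ι] {n : ℕ} {p : ℕ → Matrix ι ι R[X]}
    (hp : ∀ m < n, IsMonicPolyMatrix m (p m)) {v : ι → R[X]} (hv : ∀ j, (v j).degree < n) :
    v ∈ Submodule.span R {w | ∃ m < n, ∃ i, p m i = w} := by
  cases nonempty_fintype ι
  induction n generalizing v with
  | zero => simp [show v = 0 from funext fun j => by simpa using hv j]
  | succ n ih =>
    have hpn := hp n n.lt_succ_self
    let w : ι → R[X] := ∑ i, (v i).coeff n • p n i
    have hw : w ∈ Submodule.span R {w | ∃ m < n + 1, ∃ i, p m i = w} :=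
      Submodule.sum_mem _ fun i _ =>
        Submodule.smul_mem _ _ (Submodule.subset_span ⟨n, n.lt_succ_self, i, rfl⟩)
    have hvw (j : ι) : ((v - w) j).degree < n := by
      refine (degree_lt_iff_coeff_zero _ _).mpr fun m hm => ?_
      have hwm : (w j).coeff m = ∑ i, (v i).coeff n * (p n i j).coeff m := by
        simp [w, finsetSum_coeff]
      rw [Pi.sub_apply, coeff_sub, hwm]
      rcases hm.eq_or_lt with rfl | hm
      · simp [hpn.coeff_self, Matrix.one_apply]
      · simp [(degree_lt_iff_coeff_zero _ _).mp (hv j) m hm,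
          coeff_eq_zero_of_natDegree_lt ((hpn.natDegree_le _ j).trans_lt hm)]
    have hmono : {w | ∃ m < n, ∃ i, p m i = w} ⊆ {w | ∃ m < n + 1, ∃ i, p m i = w} :=
      fun _ ⟨m, hm, h⟩ => ⟨m, hm.trans n.lt_succ_self, h⟩
    rw [← sub_add_cancel v w]
    exact add_mem
      (Submodule.span_mono hmono (ih (fun m hm => hp m (hm.trans n.lt_succ_self)) hvw)) hw

theorem IsMonicMatPoly.exists_isMonicPolyMatrix {N n : ℕ} {F : ℝ → Matrix (Fin N) (Fin N) ℂ}
    (hF : IsMonicMatPoly N n F) :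
    ∃ p : Matrix (Fin N) (Fin N) ℂ[X], IsMonicPolyMatrix n p ∧
      F = fun x : ℝ => (evalRingHom (x : ℂ)).mapMatrix p := by
  obtain ⟨c, hc, hF⟩ := hF
  refine ⟨Matrix.of fun i j => ∑ k ∈ range (n + 1), monomial k (c k i j), ⟨fun i j => ?_,
    fun i j => ?_⟩, ?_⟩
  · exact natDegree_sum_le_of_forall_le _ _ fun k hk =>
      (natDegree_monomial_le _).trans (Nat.lt_succ_iff.mp (mem_range.mp hk))
  · simp [finsetSum_coeff, coeff_monomial, hc]
  · ext x i j
    simp [hF, Matrix.sum_apply, eval_finsetSum, mul_comm]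

end MonicPolyMatrix

section HermiteWeight

open Polynomial

open scoped Nat

variable {N : ℕ} {α : Fin N → ℝ}

/-- The matrix `L` of the Hermite-type weight, as a matrix with polynomial entries. -/
noncomputable def hermiteMatrix (α : Fin N → ℝ) : Matrix (Fin N) (Fin N) ℂ[X] :=
  scaledToeplitz α (endExpSeries (hermiteRaising ℂ) 1)

/-- The scaled Toeplitz matrix of the series `2⁻ⁿ H_n(x - t)` in `t`, a monic matrix polynomial of
degree `n` whose last row is that of the `n`-th monic orthogonal polynomial. -/
noncomputable def shiftedHermiteMatrix (α : Fin N → ℝ) (n : ℕ) : Matrix (Fin N) (Fin N) ℂ[X] :=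
  ((2 : ℂ) ^ n)⁻¹ • scaledToeplitz α (endExpSeries (-derivative) (physHermite ℂ n))

theorem hermiteMatrix_apply (α : Fin N → ℝ) (i j : Fin N) :
    hermiteMatrix α i j =
      if j ≤ i then (α i / α j) • ((i - j : ℕ)! : ℂ)⁻¹ • physHermite ℂ (i - j) else 0 := by
  rw [hermiteMatrix, scaledToeplitz_apply, coeff_endExpSeries, physHermite]

theorem Lmat_eq_mapMatrix (α : Fin N → ℝ) (x : ℝ) :
    Lmat N α x = (evalRingHom (x : ℂ)).mapMatrix (hermiteMatrix α) := by
  ext i j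
  rw [RingHom.mapMatrix_apply, Matrix.map_apply, hermiteMatrix_apply, Lmat, Matrix.of_apply]
  simp only [Fin.val_fin_le]
  split_ifs
  · simp only [Complex.ofReal_mul, Complex.ofReal_div, Complex.ofReal_natCast, coe_evalRingHom,
      eval_smul, eval_physHermite, smul_eq_mul, Complex.real_smul]
    ring
  · simp

theorem natDegree_hermiteMatrix_le (α : Fin N → ℝ) (i j : Fin N) :
    (hermiteMatrix α i j).natDegree ≤ N - 1 - j := by
  rw [hermiteMatrix_apply]
  split_ifs
  · refine (natDegree_smul_le _ _).trans <| (natDegree_smul_le _ _).trans <|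
      (natDegree_physHermite_le _).trans ?_
    omega
  · simp

theorem degree_vecMul_hermiteMatrix_lt {n : ℕ} {v : Fin N → ℂ[X]} (hv : ∀ j, (v j).degree < n)
    (k : Fin N) : ((v ᵥ* hermiteMatrix α) k).degree < (n + (N - 1 - k) : ℕ) := by
  rw [← mem_degreeLT, Matrix.vecMul, dotProduct]
  refine Submodule.sum_mem _ fun j _ => mem_degreeLT.mpr ?_
  rcases eq_or_ne (v j) 0 with hvj | hvj
  · simp [hvj]
  · have hvj_lt := (natDegree_lt_iff_degree_lt hvj).mpr (hv j)
    refine degree_le_natDegree.trans_lt (Nat.cast_lt.mpr (natDegree_mul_le.trans_lt ?_))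
    exact Nat.add_lt_add_of_lt_of_le hvj_lt (natDegree_hermiteMatrix_le α j k)

theorem isMonicPolyMatrix_shiftedHermiteMatrix (hα : ∀ i, α i ≠ 0) (n : ℕ) :
    IsMonicPolyMatrix n (shiftedHermiteMatrix α n) where
  natDegree_le i j := by
    refine natDegree_le_iff_coeff_eq_zero.mpr fun d hd => ?_
    rw [shiftedHermiteMatrix, Matrix.smul_apply, scaledToeplitz_apply]
    split_ifs
    · have := coeff_neg_derivative_pow_eq_zero (p := physHermite ℂ n) (d := d) (m := i - j)
        ((natDegree_physHermite_le n).trans_lt (by omega))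
      simp [this]
    · simp
  coeff_self i j := by
    rw [shiftedHermiteMatrix, Matrix.smul_apply, scaledToeplitz_apply]
    rcases lt_trichotomy i j with hij | rfl | hij
    · simp [hij.not_ge, hij.ne]
    · simp [hα, coeff_physHermite_self]
    · have := coeff_neg_derivative_pow_eq_zero (p := physHermite ℂ n) (d := n) (m := i - j)
        ((natDegree_physHermite_le n).trans_lt (by omega))
      simp [hij.le, hij.ne', this]

theorem shiftedHermiteMatrix_mul_hermiteMatrix (hα : ∀ i, α i ≠ 0) (n : ℕ) :
    shiftedHermiteMatrix α n * hermiteMatrix α =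
      ((2 : ℂ) ^ n)⁻¹ • scaledToeplitz α (endExpSeries (hermiteRaising ℂ) (physHermite ℂ n)) := by
  rw [shiftedHermiteMatrix, hermiteMatrix, Matrix.smul_mul, ← scaledToeplitz_mul hα,
    ← endExpSeries_physHermite]

theorem shiftedHermiteMatrix_mul_hermiteMatrix_apply (hα : ∀ i, α i ≠ 0) (n : ℕ) {i k : Fin N}
    (hki : k ≤ i) :
    (shiftedHermiteMatrix α n * hermiteMatrix α) i k =
      (((2 ^ n)⁻¹ / (i - k : ℕ)! * (α i / α k) : ℝ) : ℂ) • physHermite ℂ (n + (i - k)) := by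
  rw [shiftedHermiteMatrix_mul_hermiteMatrix hα, Matrix.smul_apply, scaledToeplitz_apply,
    if_pos hki, coeff_endExpSeries, hermiteRaising_pow_physHermite, ← Complex.coe_smul, smul_smul,
    smul_smul]
  congr 1
  push_cast
  ring

theorem matIP_hermW_apply (p q : Matrix (Fin N) (Fin N) ℂ[X]) (i j : Fin N) :
    matIP N (hermW N α) (fun x => (evalRingHom (x : ℂ)).mapMatrix p)
        (fun x => (evalRingHom (x : ℂ)).mapMatrix q) i j =
      gaussianForm ((p * hermiteMatrix α) i) ((q * hermiteMatrix α) j) := by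
  rw [gaussianForm_apply, ← map_sum, gaussianIntegral_apply, matIP, matInt, Matrix.of_apply]
  congr 1 with y
  let E : Matrix (Fin N) (Fin N) ℂ[X] →+* Matrix (Fin N) (Fin N) ℂ :=
    (evalRingHom (y : ℂ)).mapMatrix
  have hfactor : E p * hermW N α y * (E q)ᴴ =
      Real.exp (-y ^ 2) • (E (p * hermiteMatrix α) * (E (q * hermiteMatrix α))ᴴ) := by
    simp only [hermW, Lmat_eq_mapMatrix, map_mul, Matrix.conjTranspose_mul, Matrix.mul_smul,
      Matrix.smul_mul, Matrix.mul_assoc, E]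
  rw [hfactor, Matrix.smul_apply, Matrix.mul_apply, Complex.real_smul, eval_finsetSum]
  simp [E, eval_ofReal_map_conj]

theorem gaussianForm_shiftedHermiteMatrix_eq_zero (hα : ∀ i, α i ≠ 0) {n : ℕ} {i : Fin N}
    (hi : (i : ℕ) = N - 1) {v : Fin N → ℂ[X]} (hv : ∀ j, (v j).degree < n) :
    gaussianForm ((shiftedHermiteMatrix α n * hermiteMatrix α) i) (v ᵥ* hermiteMatrix α) = 0 := by
  rw [gaussianForm_apply]
  refine sum_eq_zero fun k _ => ?_
  rw [shiftedHermiteMatrix_mul_hermiteMatrix_apply hα n (Fin.le_def.mpr (by omega)), smul_mul_assoc,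
    map_smul, gaussianIntegral_physHermite_mul_eq_zero, smul_zero]
  exact degree_map_le.trans_lt (hi ▸ degree_vecMul_hermiteMatrix_lt hv k)

theorem gaussianForm_vecMul_eq_zero_of_forall_lt {n : ℕ} {p : ℕ → Matrix (Fin N) (Fin N) ℂ[X]}
    (hp : ∀ m < n, IsMonicPolyMatrix m (p m)) {u : Fin N → ℂ[X]}
    (hu : ∀ m < n, ∀ j, gaussianForm u ((p m * hermiteMatrix α) j) = 0) {v : Fin N → ℂ[X]}
    (hv : ∀ j, (v j).degree < n) :
    gaussianForm u (v ᵥ* hermiteMatrix α) = 0 := by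
  have hspan := mem_span_rows_of_degree_lt hp hv
  clear hv
  induction hspan using Submodule.span_induction with
  | mem w hw =>
    obtain ⟨m, hm, j, rfl⟩ := hw
    exact hu m hm j
  | zero => simp
  | add v w _ _ hv hw => rw [Matrix.add_vecMul, map_add, hv, hw, add_zero]
  | smul a v _ hv => rw [Matrix.smul_vecMul, map_smulₛₗ, hv, smul_zero]

theorem mul_hermiteMatrix_last_row_eq (hα : ∀ i, α i ≠ 0) {n : ℕ}
    {p : ℕ → Matrix (Fin N) (Fin N) ℂ[X]} (hp : ∀ m ≤ n, IsMonicPolyMatrix m (p m)) {i : Fin N}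
    (hi : (i : ℕ) = N - 1)
    (horth : ∀ m < n, ∀ j,
      gaussianForm ((p n * hermiteMatrix α) i) ((p m * hermiteMatrix α) j) = 0) :
    (p n * hermiteMatrix α) i = (shiftedHermiteMatrix α n * hermiteMatrix α) i := by
  let v : Fin N → ℂ[X] := (p n - shiftedHermiteMatrix α n) i
  have hv (j : Fin N) : (v j).degree < n :=
    (hp n le_rfl).degree_sub_lt (isMonicPolyMatrix_shiftedHermiteMatrix hα n) i j
  have hvL : v ᵥ* hermiteMatrix α =
      (p n * hermiteMatrix α) i - (shiftedHermiteMatrix α n * hermiteMatrix α) i :=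
    Matrix.sub_vecMul _ _ _
  rw [← sub_eq_zero, ← hvL]
  apply gaussianForm_self_eq_zero
  nth_rw 1 [hvL]
  rw [map_sub, LinearMap.sub_apply,
    gaussianForm_vecMul_eq_zero_of_forall_lt (fun m hm => hp m hm.le) horth hv,
    gaussianForm_shiftedHermiteMatrix_eq_zero hα hi hv, sub_zero]

end HermiteWeight

open Polynomial in
theorem hermite_last_row_explicit_general {N : ℕ} {α : Fin N → ℝ} (hα : ∀ j, α j ≠ 0)
    {P : ℕ → ℝ → Matrix (Fin N) (Fin N) ℂ} {n : ℕ} (hPmonic : ∀ m ≤ n, IsMonicMatPoly N m (P m))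
    (hPorth : ∀ m < n, matIP N (hermW N α) (P n) (P m) = 0) {i : Fin N} (hi : (i : ℕ) = N - 1)
    (k : Fin N) (x : ℝ) :
    (P n x * Lmat N α x) i k =
      ((((2 : ℝ) ^ n)⁻¹ / (Nat.factorial (N - 1 - (k : ℕ))) * (α i / α k) *
        hermiteF (n + (N - 1) - (k : ℕ)) x : ℝ) : ℂ) := by
  choose! p hp hPp using fun m hm => (hPmonic m hm).exists_isMonicPolyMatrix
  have horth : ∀ m < n, ∀ j,
      gaussianForm ((p n * hermiteMatrix α) i) ((p m * hermiteMatrix α) j) = 0 := by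
    intro m hm j
    rw [← matIP_hermW_apply, ← hPp n le_rfl, ← hPp m hm.le, hPorth m hm, Matrix.zero_apply]
  have hki : k ≤ i := Fin.le_def.mpr (by omega)
  have hdeg : n + (N - 1) - (k : ℕ) = n + (i - k) := by omega
  rw [hPp n le_rfl, Lmat_eq_mapMatrix, ← map_mul, RingHom.mapMatrix_apply, Matrix.map_apply,
    mul_hermiteMatrix_last_row_eq hα hp hi horth,
    shiftedHermiteMatrix_mul_hermiteMatrix_apply hα n hki, coe_evalRingHom, eval_smul,
    eval_physHermite, smul_eq_mul, ← Complex.ofReal_mul, hdeg, hi]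

/-- **The last row of `P(x,n)L(x)`** (Proposition 5.14 of the paper):
`(P(x,n)L(x))_{N,k} = (2^{−n}/(N−k)!)(α_N/α_k) H_{n+N−k}(x)` (in 1-based indices;
below the row index is the last index `N−1` in 0-based terms). -/
theorem hermite_last_row_explicit
    (N : ℕ) (hN : 1 ≤ N) (α : Fin N → ℝ) (hα : ∀ j, 0 < α j)
    (P : ℕ → ℝ → Matrix (Fin N) (Fin N) ℂ)
    (hPmonic : ∀ n, IsMonicMatPoly N n (P n))
    (hPorth : ∀ n m, n ≠ m → matIP N (hermW N α) (P n) (P m) = 0)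
    (hHpos : ∀ n, (matIP N (hermW N α) (P n) (P n)).PosDef)
    :
    ∀ (n : ℕ) (k : Fin N) (x : ℝ),
      (P n x * Lmat N α x) ⟨N - 1, by omega⟩ k =
        (((((2 : ℝ) ^ n)⁻¹ / (Nat.factorial (N - 1 - (k : ℕ)))) *
            (α ⟨N - 1, by omega⟩ / α k) *
            hermiteF (n + (N - 1) - (k : ℕ)) x : ℝ) : ℂ) :=
  fun _ k x => hermite_last_row_explicit_general (fun j => (hα j).ne') (fun m _ => hPmonic m)
    (fun m hm => hPorth _ m hm.ne') rfl k x
end
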